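/- Let k ≥ 1 be an integer and let G be a finite simple graph with at least 3k − 2 vertices and with no isolated vertices. Then G has a matching of size k, or G admits a crown decomposition. -/

import Mathlib

/-- A crown decomposition of `G`: a partition of the vertex set into a nonempty independent
set `C` (crown), a nonempty set `H` (head) separating `C` from `R` (royal body), together
with a matching of `H` into `C`. -/
def IsCrownDecomposition {V : Type*} [Fintype V] [DecidableEq V] (G : SimpleGraph V)
    (C H R : Finset V) : Prop :=
  C.Nonempty ∧ H.Nonempty ∧ C ∪ H ∪ R = Finset.univ ∧
  Disjoint C H ∧ Disjoint C R ∧ Disjoint H R ∧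
  (∀ u ∈ C, ∀ v ∈ C, ¬ G.Adj u v) ∧
  (∀ u ∈ C, ∀ v ∈ R, ¬ G.Adj u v) ∧
  ∃ f : H → C, Function.Injective f ∧ ∀ h : H, G.Adj ↑h ↑(f h)

/-!
Grow a matching greedily. If it stops with fewer than `k` edges, then the unmatched vertices form an
independent set of size at least `(3k - 2) - 2(k - 1) = k`. Let `I` be `k` of them. If `I` satisfies
Hall's condition, then `I` is matched into its neighborhood, which is disjoint from `I`, and this
matching has `k` edges. Otherwise take a minimal `C ⊆ I` with fewer neighbors than elements. If some
`A ⊆ N(C)` violated Hall's condition towards `C`, then removing `N(A)` from `C` would destroy more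
neighbors than elements and leave a smaller violating set. Hence `N(C)` is matched into `C`, and `C`
is a crown with head `N(C)`.
-/

open Finset

section Matching

variable {V : Type*} {G : SimpleGraph V}

theorem encard_verts_eq_two_mul_encard_edgeSet {M : G.Subgraph} (hM : M.IsMatching) :
    M.verts.encard = 2 * M.edgeSet.encard := by
  have card_fiber (e : M.edgeSet) : Nat.card {v // hM.toEdge v = e} = 2 := by
    obtain ⟨⟨u, v⟩, huv⟩ := e
    have hne : (⟨u, M.edge_vert huv⟩ : M.verts) ≠ ⟨v, M.edge_vert huv.symm⟩ :=
      fun h => (M.adj_sub huv).ne (congrArg Subtype.val h)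
    exact (congrArg Set.ncard (hM.toEdge_preimage_singleton huv)).trans (Set.ncard_pair hne)
  have (e : M.edgeSet) : Finite {v // hM.toEdge v = e} :=
    Nat.finite_of_card_ne_zero (card_fiber e ▸ two_ne_zero)
  calc
    M.verts.encard = ENat.card (M.edgeSet × Fin 2) :=
      ENat.card_congr <| (Equiv.sigmaFiberEquiv hM.toEdge).symm.trans <|
        (Equiv.sigmaCongrRight fun e => Finite.equivFinOfCardEq (card_fiber e)).trans
          (Equiv.sigmaEquivProd _ _)
    _ = 2 * M.edgeSet.encard := by
      rw [ENat.card_prod, mul_comm, ENat.card_eq_coe_fintype_card, Fintype.card_fin]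
      rfl

theorem exists_isMatching_encard_eq_of_injective {s : Set V} {f : s → V} (hf : Function.Injective f)
    (hfs : ∀ v : s, f v ∉ s) (hadj : ∀ v : s, G.Adj v (f v)) :
    ∃ M : G.Subgraph, M.IsMatching ∧ M.edgeSet.encard = s.encard := by
  have hdisj : Disjoint s (Set.range f) :=
    Set.disjoint_right.2 (Set.forall_mem_range.2 hfs)
  obtain ⟨M, hverts, hM⟩ := SimpleGraph.Subgraph.IsMatching.exists_of_disjoint_sets_of_equiv hdisj
    (Equiv.ofInjective f hf) hadj
  refine ⟨M, hM, ?_⟩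
  have hrange : (Set.range f).encard = s.encard :=
    ENat.card_congr (Equiv.ofInjective f hf).symm
  have htwo : 2 * M.edgeSet.encard = 2 * s.encard := by
    rw [← encard_verts_eq_two_mul_encard_edgeSet hM, hverts, Set.encard_union_eq hdisj, hrange,
      two_mul]
  exact (ENat.mul_right_strictMono two_ne_zero (ENat.natCast_ne_top 2)).injective htwo

theorem exists_isMatching_encard_eq_add_one_of_not_isIndepSet_compl {M : G.Subgraph}
    (hM : M.IsMatching) (hind : ¬ G.IsIndepSet M.vertsᶜ) :
    ∃ M' : G.Subgraph, M'.IsMatching ∧ M'.edgeSet.encard = M.edgeSet.encard + 1 := by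
  obtain ⟨u, hu, v, hv, huv⟩ : ∃ u ∉ M.verts, ∃ v ∉ M.verts, G.Adj u v := by
    simp only [SimpleGraph.isIndepSet_iff, Set.Pairwise] at hind
    push Not at hind
    obtain ⟨u, hu, v, hv, -, huv⟩ := hind
    exact ⟨u, hu, v, hv, huv⟩
  have hdisj : Disjoint M.support (G.subgraphOfAdj huv).support := by
    rw [hM.support_eq_verts, SimpleGraph.support_subgraphOfAdj]
    simp only [Set.disjoint_insert_right, Set.disjoint_singleton_right]
    exact ⟨hu, hv⟩
  refine ⟨M ⊔ G.subgraphOfAdj huv, hM.sup (.subgraphOfAdj huv) hdisj, ?_⟩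
  have hnew : s(u, v) ∉ M.edgeSet := fun h => hu (M.edge_vert h)
  rw [SimpleGraph.Subgraph.edgeSet_sup, SimpleGraph.edgeSet_subgraphOfAdj, Set.union_singleton,
    Set.encard_insert_of_notMem hnew]

theorem exists_isMatching_encard_eq_or_lt_and_isIndepSet_compl (G : SimpleGraph V) (k : ℕ) :
    (∃ M : G.Subgraph, M.IsMatching ∧ M.edgeSet.encard = k) ∨
      ∃ M : G.Subgraph, M.IsMatching ∧ M.edgeSet.encard < k ∧ G.IsIndepSet M.vertsᶜ := by
  induction k with
  | zero => exact .inl ⟨⊥, fun _ hv => hv.elim, by simp⟩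
  | succ k ih =>
    push_cast
    obtain ⟨M, hM, hcard⟩ | ⟨M, hM, hcard, hind⟩ := ih
    · by_cases hind : G.IsIndepSet M.vertsᶜ
      · exact .inr ⟨M, hM, by rw [hcard]; exact_mod_cast k.lt_succ_self, hind⟩
      · exact .inl <| hcard ▸
          exists_isMatching_encard_eq_add_one_of_not_isIndepSet_compl hM hind
    · exact .inr ⟨M, hM, hcard.trans_le le_self_add, hind⟩

theorem exists_isMatching_or_exists_isIndepSet_card_eq [Fintype V] (G : SimpleGraph V) {k m : ℕ}
    (h : 2 * k + m ≤ Fintype.card V + 2) :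
    (∃ M : G.Subgraph, M.IsMatching ∧ M.edgeSet.ncard = k) ∨
      ∃ I : Finset V, G.IsIndepSet I ∧ #I = m := by
  classical
  obtain ⟨M, hM, hcard⟩ | ⟨M, hM, hcard, hind⟩ :=
    exists_isMatching_encard_eq_or_lt_and_isIndepSet_compl G k
  · exact .inl ⟨M, hM, by rw [Set.ncard, hcard, ENat.toNat_natCast]⟩
  · have hverts := encard_verts_eq_two_mul_encard_edgeSet hM
    rw [← M.edgeSet.toFinite.cast_ncard_eq] at hcard hverts
    rw [← M.verts.toFinite.cast_ncard_eq] at hverts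
    norm_cast at hcard hverts
    have hcompl := Set.ncard_add_ncard_compl M.verts
    rw [Nat.card_eq_fintype_card] at hcompl
    obtain ⟨I, hI, hIcard⟩ := Finset.exists_subset_card_eq (s := M.vertsᶜ.toFinset) (n := m)
      (by rw [← Set.ncard_eq_toFinset_card']; omega)
    exact .inr ⟨I, hind.mono (Set.subset_toFinset.1 hI), hIcard⟩

end Matching

section Neighborhood

variable {V : Type*} [DecidableEq V] (G : SimpleGraph V) [G.LocallyFinite]

/-- The neighborhood `N(s)` of a finite set `s` of vertices: all vertices with a neighbor in `s`.
The vertices of `s` itself are not excluded, so `N(s)` meets `s` unless `s` is independent. -/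
def neighborhood (s : Finset V) : Finset V := s.biUnion fun v => G.neighborFinset v

variable {G} {s t : Finset V}

theorem mem_neighborhood {w : V} : w ∈ neighborhood G s ↔ ∃ v ∈ s, G.Adj v w := by
  simp only [neighborhood, mem_biUnion, SimpleGraph.mem_neighborFinset]

theorem neighborhood_mono (h : s ⊆ t) : neighborhood G s ⊆ neighborhood G t :=
  biUnion_subset_biUnion_of_subset_left _ h

theorem disjoint_neighborhood_self (hs : G.IsIndepSet s) : Disjoint s (neighborhood G s) := by
  refine disjoint_right.2 fun w hw hws => ?_
  obtain ⟨v, hv, hvw⟩ := mem_neighborhood.1 hw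
  exact hs hv hws hvw.ne hvw

theorem exists_injective_adj_of_forall_card_le_card_neighborhood_inter
    (hall : ∀ a ⊆ s, #a ≤ #(neighborhood G a ∩ t)) :
    ∃ f : s → t, Function.Injective f ∧ ∀ v : s, G.Adj v (f v) := by
  obtain ⟨f, hf, hmem⟩ := (all_card_le_biUnion_card_iff_exists_injective
      fun v : s => G.neighborFinset v ∩ t).1 fun a => by
    have hcard := hall (a.map (.subtype _)) (map_subtype_subset a)
    rwa [card_map, neighborhood, map_eq_image, image_biUnion, biUnion_inter] at hcard
  simp only [mem_inter, SimpleGraph.mem_neighborFinset] at hmem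
  exact ⟨fun v => ⟨f v, (hmem v).2⟩, fun u v huv => hf (congrArg Subtype.val huv),
    fun v => (hmem v).1⟩

theorem exists_isMatching_ncard_eq_of_forall_card_le_card_neighborhood (hs : G.IsIndepSet s)
    (hall : ∀ a ⊆ s, #a ≤ #(neighborhood G a)) :
    ∃ M : G.Subgraph, M.IsMatching ∧ M.edgeSet.ncard = #s := by
  obtain ⟨f, hf, hadj⟩ :=
    exists_injective_adj_of_forall_card_le_card_neighborhood_inter (t := neighborhood G s)
      fun a ha => by
        rw [inter_eq_left.2 (neighborhood_mono ha)]
        exact hall a ha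
  obtain ⟨M, hM, hcard⟩ := exists_isMatching_encard_eq_of_injective (s := (s : Set V))
    (Subtype.val_injective.comp hf)
    (fun v => disjoint_right.1 (disjoint_neighborhood_self hs) (f v).2) hadj
  exact ⟨M, hM, by rw [Set.ncard, hcard, ← Set.ncard, Set.ncard_coe_finset]⟩

theorem neighborhood_sdiff_neighborhood_subset (s a : Finset V) :
    neighborhood G (s \ neighborhood G a) ⊆ neighborhood G s \ a := by
  intro w hw
  obtain ⟨v, hv, hvw⟩ := mem_neighborhood.1 hw
  rw [mem_sdiff] at hv ⊢
  exact ⟨mem_neighborhood.2 ⟨v, hv.1, hvw⟩,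
    fun hwa => hv.2 (mem_neighborhood.2 ⟨w, hwa, hvw.symm⟩)⟩

theorem card_le_card_neighborhood_inter_of_minimal
    (hs : Minimal (fun s => #(neighborhood G s) < #s) s) {a : Finset V}
    (ha : a ⊆ neighborhood G s) : #a ≤ #(neighborhood G a ∩ s) := by
  by_contra! hlt
  have hsmaller : #(neighborhood G (s \ neighborhood G a)) < #(s \ neighborhood G a) := by
    have hle := card_le_card (neighborhood_sdiff_neighborhood_subset (G := G) s a)
    have hcard_a := card_sdiff_add_card_eq_card ha
    have hcard_s := card_sdiff_add_card_inter s (neighborhood G a)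
    have hlt_s := hs.prop
    rw [inter_comm] at hcard_s
    omega
  have hdisj : Disjoint s (neighborhood G a) :=
    Finset.sdiff_eq_self_iff_disjoint.1 (hs.eq_of_le hsmaller sdiff_subset)
  obtain ⟨w, hw⟩ : a.Nonempty := card_pos.1 (by omega)
  obtain ⟨v, hv, hvw⟩ := mem_neighborhood.1 (ha hw)
  exact disjoint_left.1 hdisj hv (mem_neighborhood.2 ⟨w, hw, hvw.symm⟩)

end Neighborhood

section Crown

variable {V : Type*} [Fintype V] [DecidableEq V] {G : SimpleGraph V} [G.LocallyFinite]

theorem isCrownDecomposition_neighborhood {C : Finset V} (hC : G.IsIndepSet C)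
    (hN : (neighborhood G C).Nonempty) {f : neighborhood G C → C} (hf : Function.Injective f)
    (hadj : ∀ h : neighborhood G C, G.Adj h (f h)) :
    IsCrownDecomposition G C (neighborhood G C) (C ∪ neighborhood G C)ᶜ := by
  obtain ⟨w, hw⟩ := hN
  refine ⟨⟨f ⟨w, hw⟩, (f ⟨w, hw⟩).2⟩, ⟨w, hw⟩, union_compl _, disjoint_neighborhood_self hC,
    disjoint_compl_right.mono_left subset_union_left,
    disjoint_compl_right.mono_left subset_union_right,
    fun u hu v hv huv => hC hu hv huv.ne huv, fun u hu v hv huv => ?_, f, hf, hadj⟩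
  exact mem_compl.1 hv (mem_union_right C (mem_neighborhood.2 ⟨u, hu, huv⟩))

theorem exists_isCrownDecomposition_of_card_neighborhood_lt {I : Finset V} (hI : G.IsIndepSet I)
    (hiso : ∀ v ∈ I, ∃ w, G.Adj v w) (hlt : #(neighborhood G I) < #I) :
    ∃ C H R : Finset V, IsCrownDecomposition G C H R := by
  obtain ⟨C, hCI, hC⟩ :=
    exists_minimal_le_of_wellFoundedLT (fun s => #(neighborhood G s) < #s) I hlt
  obtain ⟨v, hv⟩ : C.Nonempty := card_pos.1 ((Nat.zero_le _).trans_lt hC.prop)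
  obtain ⟨w, hvw⟩ := hiso v (hCI hv)
  obtain ⟨f, hf, hadj⟩ := exists_injective_adj_of_forall_card_le_card_neighborhood_inter
    fun _ ha => card_le_card_neighborhood_inter_of_minimal hC ha
  exact ⟨C, _, _, isCrownDecomposition_neighborhood (hI.mono (coe_subset.2 hCI))
    ⟨w, mem_neighborhood.2 ⟨v, hv, hvw⟩⟩ hf hadj⟩

end Crown

/-- Every graph with at least `3 * k - 2` vertices and no isolated vertices has a matching
of size `k` or admits a crown decomposition. -/
theorem matching_or_crownDecomposition {V : Type*} [Fintype V] [DecidableEq V]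
    (G : SimpleGraph V) (k : ℕ) (hk : 1 ≤ k) (hcard : 3 * k - 2 ≤ Fintype.card V)
    (hiso : ∀ v : V, ∃ w, G.Adj v w) :
    (∃ M : G.Subgraph, M.IsMatching ∧ M.edgeSet.ncard = k) ∨
      ∃ C H R : Finset V, IsCrownDecomposition G C H R := by
  classical
  obtain hmatching | ⟨I, hI, rfl⟩ :=
    exists_isMatching_or_exists_isIndepSet_card_eq G (k := k) (m := k) (by omega)
  · exact .inl hmatching
  by_cases hall : ∀ a ⊆ I, #a ≤ #(neighborhood G a)
  · exact .inl (exists_isMatching_ncard_eq_of_forall_card_le_card_neighborhood hI hall)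
  · push Not at hall
    obtain ⟨J, hJI, hlt⟩ := hall
    exact .inr (exists_isCrownDecomposition_of_card_neighborhood_lt
      (hI.mono (coe_subset.2 hJI)) (fun v _ => hiso v) hlt)
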